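/- Let m > 0 and r > 0 be real numbers, X a metric space, Y a subset of X, and x a point of X. Let B be the closed metric ball of radius r centered at x, and for s ∈ (0, r) let S_s = {y ∈ X : d(x,y) = s}. Then there exists s ∈ (0, r) such that HC_{m−1}(S_s ∩ Y) ≤ (2/r)·HC_m(B ∩ Y). -/

import Mathlib

/-!
If `f` is `K`-Lipschitz, the ball `B(p, ρ)` meets the fiber `f ⁻¹' {s}` only for `s` in the
interval `[f p - K * ρ, f p + K * ρ]`. Given a covering of `A` by balls of radii `ρ_i`, the sum of
`ρ_i ^ (m - 1)` over the balls whose interval contains `s` therefore bounds the `(m - 1)`-content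
of `A ∩ f ⁻¹' {s}`, and its integral over `s` is at most
`∑ ρ_i ^ (m - 1) * (2 * K * ρ_i) = 2 * K * ∑ ρ_i ^ m`.

The content of a fiber need not be measurable in `s`, but the infimum of these bounds along a
minimizing sequence of coverings is. It dominates the content of the fibers and has integral at
most `2 * K` times the `m`-content of `A`, so on any set of finite positive length it is somewhere
at most its average. For spheres, `f` is the distance to the center.
-/

open Metric Set
open scoped ENNReal NNReal

/-- The `m`-dimensional Hausdorff content of a subset `A` of a metric space `X`:
the infimum, over all countable coverings of `A` by closed metric balls of `X` with
radii `r_i`, of `∑ r_i ^ m`. -/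
noncomputable def HC {X : Type*} [MetricSpace X] (m : ℝ) (A : Set X) : ℝ≥0∞ :=
  ⨅ (S : Set (X × ℝ≥0)) (_ : S.Countable)
    (_ : A ⊆ ⋃ p ∈ S, Metric.closedBall p.1 (p.2 : ℝ)),
    ∑' p : S, ((p : X × ℝ≥0).2 : ℝ≥0∞) ^ m


open MeasureTheory Filter
open scoped Topology

lemma rpow_sub_one_mul_self_le {a : ℝ≥0∞} (ha : a ≠ ⊤) (m : ℝ) :
    a ^ (m - 1) * a ≤ a ^ m := by
  rcases eq_or_ne a 0 with rfl | h0
  · -- For `m < 1` the left-hand side is `⊤ * 0`, which is `0`.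
    simp
  · rw [ENNReal.rpow_sub _ _ h0 ha, ENNReal.rpow_one, ENNReal.div_mul_cancel h0 ha]

/-- The `m`-dimensional cost `∑ ρ ^ m` of a family `S` of balls, the quantity minimized by the
Hausdorff content `HC m`. -/
noncomputable def ballCost {X : Type*} (m : ℝ) (S : Set (X × ℝ≥0)) : ℝ≥0∞ :=
  ∑' p : S, ((p : X × ℝ≥0).2 : ℝ≥0∞) ^ m

section Content

variable {X : Type*} [MetricSpace X] {m : ℝ} {A B : Set X} {S : Set (X × ℝ≥0)}

/-- A countable covering of `A` by closed balls, a ball being encoded as the pair of its center and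
its radius. -/
structure IsBallCover (S : Set (X × ℝ≥0)) (A : Set X) : Prop where
  countable : S.Countable
  subset : A ⊆ ⋃ p ∈ S, closedBall p.1 (p.2 : ℝ)

lemma IsBallCover.mono (hS : IsBallCover S B) (hAB : A ⊆ B) : IsBallCover S A :=
  ⟨hS.countable, hAB.trans hS.subset⟩

lemma exists_isBallCover (A : Set X) : ∃ S, IsBallCover S A := by
  rcases A.eq_empty_or_nonempty with rfl | ⟨x, -⟩
  · exact ⟨∅, countable_empty, empty_subset _⟩
  · refine ⟨range fun n : ℕ => (x, (n : ℝ≥0)), countable_range _, ?_⟩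
    simp [iUnion_closedBall_nat]

lemma HC_eq_sInf (m : ℝ) (A : Set X) : HC m A = sInf (ballCost m '' {S | IsBallCover S A}) := by
  apply le_antisymm
  · refine le_sInf ?_
    rintro _ ⟨S, hS, rfl⟩
    exact iInf_le_of_le S (iInf₂_le hS.countable hS.subset)
  · exact le_iInf fun S => le_iInf₂ fun hS hA => sInf_le ⟨S, ⟨hS, hA⟩, rfl⟩

lemma IsBallCover.HC_le (hS : IsBallCover S A) : HC m A ≤ ballCost m S :=
  HC_eq_sInf m A ▸ sInf_le (mem_image_of_mem _ hS)

lemma HC_mono (hAB : A ⊆ B) : HC m A ≤ HC m B := by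
  rw [HC_eq_sInf, HC_eq_sInf]
  exact sInf_le_sInf (image_mono fun S hS => hS.mono hAB)

lemma exists_seq_isBallCover_tendsto_HC (m : ℝ) (A : Set X) :
    ∃ S : ℕ → Set (X × ℝ≥0), (∀ n, IsBallCover (S n) A) ∧
      Tendsto (fun n => ballCost m (S n)) atTop (𝓝 (HC m A)) := by
  obtain ⟨u, -, hlim, hu⟩ := exists_seq_tendsto_sInf
    (image_nonempty.2 (exists_isBallCover A) : (ballCost m '' {S | IsBallCover S A}).Nonempty)
    (OrderBot.bddBelow _)
  choose S hS hSu using hu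
  refine ⟨S, hS, ?_⟩
  simpa only [hSu, HC_eq_sInf] using hlim

end Content

section Fibers

variable {X : Type*} {f : X → ℝ} {K : ℝ≥0} {m : ℝ} {S : Set (X × ℝ≥0)}

/-- The balls `B(p, ρ)` of the family `S` for which `s` is within `K * ρ` of `f p`. If `f` is
`K`-Lipschitz, these include all the balls of `S` that meet the fiber `f ⁻¹' {s}`. -/
def ballsNearFiber (f : X → ℝ) (K : ℝ≥0) (S : Set (X × ℝ≥0)) (s : ℝ) : Set (X × ℝ≥0) :=
  {p ∈ S | s ∈ closedBall (f p.1) (K * p.2)}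

lemma ballCost_ballsNearFiber (f : X → ℝ) (K : ℝ≥0) (m : ℝ) (S : Set (X × ℝ≥0)) (s : ℝ) :
    ballCost m (ballsNearFiber f K S s) =
      ∑' p : S, (closedBall (f p.1.1) (K * p.1.2)).indicator (fun _ => (p.1.2 : ℝ≥0∞) ^ m) s := by
  rw [ballCost, tsum_subtype (ballsNearFiber f K S s) fun p => (p.2 : ℝ≥0∞) ^ m,
    tsum_subtype S fun p : X × ℝ≥0 =>
      (closedBall (f p.1) (K * p.2)).indicator (fun _ => (p.2 : ℝ≥0∞) ^ m) s]
  refine tsum_congr fun p => ?_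
  classical
  simp only [indicator_apply, ballsNearFiber, mem_sep_iff, ite_and]

lemma measurable_ballCost_ballsNearFiber (hS : S.Countable) :
    Measurable fun s => ballCost m (ballsNearFiber f K S s) := by
  have := hS.to_subtype
  simp only [ballCost_ballsNearFiber]
  exact Measurable.tsum fun p => measurable_const.indicator measurableSet_closedBall

lemma lintegral_ballCost_ballsNearFiber_le (hS : S.Countable) :
    ∫⁻ s, ballCost (m - 1) (ballsNearFiber f K S s) ≤ 2 * K * ballCost m S := by
  have := hS.to_subtype
  simp only [ballCost_ballsNearFiber]
  rw [lintegral_tsum fun p => (measurable_const.indicator measurableSet_closedBall).aemeasurable,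
    ballCost, ← ENNReal.tsum_mul_left]
  refine ENNReal.tsum_le_tsum fun ⟨⟨c, ρ⟩, _⟩ => ?_
  calc ∫⁻ s, (closedBall (f c) (K * ρ)).indicator (fun _ => (ρ : ℝ≥0∞) ^ (m - 1)) s
      = (ρ : ℝ≥0∞) ^ (m - 1) * (2 * (K * ρ)) := by
        rw [lintegral_indicator_const measurableSet_closedBall, Real.volume_closedBall,
          ENNReal.ofReal_mul zero_le_two, ← NNReal.coe_mul, ENNReal.ofReal_coe_nnreal,
          ENNReal.ofReal_ofNat, ENNReal.coe_mul]
    _ = 2 * K * ((ρ : ℝ≥0∞) ^ (m - 1) * ρ) := by ring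
    _ ≤ 2 * K * (ρ : ℝ≥0∞) ^ m := by
        gcongr
        exact rpow_sub_one_mul_self_le ENNReal.coe_ne_top m

variable [MetricSpace X]

lemma IsBallCover.inter_fiber {A : Set X} (hS : IsBallCover S A) (hf : LipschitzWith K f)
    (s : ℝ) : IsBallCover (ballsNearFiber f K S s) (A ∩ f ⁻¹' {s}) := by
  refine ⟨hS.countable.mono (sep_subset _ _), ?_⟩
  rintro y ⟨hyA, rfl⟩
  obtain ⟨p, hpS, hyp⟩ := mem_iUnion₂.1 (hS.subset hyA)
  exact mem_iUnion₂.2 ⟨p, ⟨hpS, hf.mapsTo_closedBall p.1 p.2 hyp⟩, hyp⟩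

lemma exists_measurable_HC_inter_fiber_le_lintegral_le (hf : LipschitzWith K f) (m : ℝ)
    (A : Set X) :
    ∃ g : ℝ → ℝ≥0∞, Measurable g ∧ (∀ s, HC (m - 1) (A ∩ f ⁻¹' {s}) ≤ g s) ∧
      ∫⁻ s, g s ≤ 2 * K * HC m A := by
  obtain ⟨S, hS, hlim⟩ := exists_seq_isBallCover_tendsto_HC m A
  refine ⟨fun s => ⨅ n, ballCost (m - 1) (ballsNearFiber f K (S n) s),
    .iInf fun n => measurable_ballCost_ballsNearFiber (hS n).countable,
    fun s => le_iInf fun n => ((hS n).inter_fiber hf s).HC_le, ?_⟩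
  have hK : (2 * K : ℝ≥0∞) ≠ ⊤ := ENNReal.mul_ne_top ENNReal.ofNat_ne_top ENNReal.coe_ne_top
  exact ge_of_tendsto' (ENNReal.Tendsto.const_mul hlim (.inr hK)) fun n =>
    (lintegral_mono fun s => iInf_le _ n).trans
      (lintegral_ballCost_ballsNearFiber_le (hS n).countable)

end Fibers

theorem stmt6_general {X : Type*} [MetricSpace X] {f : X → ℝ} {K : ℝ≥0} (hf : LipschitzWith K f)
    (m : ℝ) (A : Set X) {T : Set ℝ} (hT₀ : volume T ≠ 0) (hT : volume T ≠ ⊤) :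
    ∃ s ∈ T, HC (m - 1) (A ∩ f ⁻¹' {s}) ≤ 2 * K / volume T * HC m A := by
  obtain ⟨g, hg, hHCg, hint⟩ := exists_measurable_HC_inter_fiber_le_lintegral_le hf m A
  obtain ⟨s, hs, hle⟩ := exists_le_setLAverage hT₀ hT hg.aemeasurable
  refine ⟨s, hs, ?_⟩
  calc HC (m - 1) (A ∩ f ⁻¹' {s}) ≤ g s := hHCg s
    _ ≤ (∫⁻ t in T, g t) / volume T := by rwa [setLAverage_eq] at hle
    _ ≤ 2 * K * HC m A / volume T := by
        gcongr
        exact (setLIntegral_le_lintegral T g).trans hint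
    _ = 2 * K / volume T * HC m A := ENNReal.mul_div_right_comm

lemma sphere_inter_subset_closedBall_inter_fiber {X : Type*} [MetricSpace X] (x : X) (Y : Set X)
    {r s : ℝ} (hs : s ≤ r) :
    {y | dist x y = s} ∩ Y ⊆ (closedBall x r ∩ Y) ∩ dist x ⁻¹' {s} :=
  fun _ ⟨hy, hyY⟩ => ⟨⟨mem_closedBall'.2 (hy.trans_le hs), hyY⟩, hy⟩

/-- Coarea inequality for Hausdorff content, ball version: for `m > 0`, `r > 0`, a subset
`Y` of a metric space `X` and a point `x`, there exists `s ∈ (0, r)` such that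
`HC_{m−1}(S(x,s) ∩ Y) ≤ (2/r)·HC_m(B(x,r) ∩ Y)`. -/
theorem stmt6 {X : Type*} [MetricSpace X] (m : ℝ) (hm : 0 < m)
    (r : ℝ) (hr : 0 < r) (Y : Set X) (x : X) :
    ∃ s ∈ Set.Ioo 0 r,
      HC (m - 1) ({y : X | dist x y = s} ∩ Y) ≤
        ENNReal.ofReal (2 / r) * HC m (Metric.closedBall x r ∩ Y) := by
  obtain ⟨s, hs, hle⟩ := stmt6_general (LipschitzWith.dist_right x) m (closedBall x r ∩ Y)
    (T := Ioo 0 r) (by simpa using hr) (by simp)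
  refine ⟨s, hs, (HC_mono (sphere_inter_subset_closedBall_inter_fiber x Y hs.2.le)).trans ?_⟩
  simpa [ENNReal.ofReal_div_of_pos hr] using hle
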